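/- Let τ : Λ → Λ be the ring automorphism induced by the group automorphism of μₙ × μₙ interchanging the two factors, so that τ(ε₀) = ε₁ and τ(ε₁) = ε₀. Then τ preserves the ideal A₁ and the submodule S, τ induces a ℤ-linear automorphism of ∧²_ℤ A₁ sending a ∧ b to τ(a) ∧ τ(b), and τ(Δ) − Δ lies in the submodule S ∧ A₁; equivalently, the image of Δ in ∧²_ℤ(A₁/S) is invariant under τ. -/

import Mathlib

noncomputable section

/-- The group `μₙ × μₙ`, realized as `Multiplicative (ZMod n) × Multiplicative (ZMod n)`. -/
abbrev MuMu (n : ℕ) : Type := Multiplicative (ZMod n) × Multiplicative (ZMod n)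

/-- The group ring `Λ = ℤ[μₙ × μₙ]`. -/
abbrev Lam (n : ℕ) : Type := MonoidAlgebra ℤ (MuMu n)

/-- The first standard generator of `μₙ × μₙ`. -/
def g0 (n : ℕ) : MuMu n := (Multiplicative.ofAdd 1, 1)

/-- The second standard generator of `μₙ × μₙ`. -/
def g1 (n : ℕ) : MuMu n := (1, Multiplicative.ofAdd 1)

/-- `ε₀`, the first standard generator viewed in `Λ`. -/
def eps0 (n : ℕ) : Lam n := MonoidAlgebra.of ℤ (MuMu n) (g0 n)

/-- `ε₁`, the second standard generator viewed in `Λ`. -/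
def eps1 (n : ℕ) : Lam n := MonoidAlgebra.of ℤ (MuMu n) (g1 n)

/-- The ideal `A₁ = ⟨(ε₀ − 1)(ε₁ − 1)⟩ ⊆ Λ`. -/
def A1 (n : ℕ) : Ideal (Lam n) := Ideal.span {(eps0 n - 1) * (eps1 n - 1)}

/-- `N = ∑_{k=0}^{n-1} ε₀^k ε₁^k ∈ Λ`. -/
def Nel (n : ℕ) : Lam n := ∑ k ∈ Finset.range n, eps0 n ^ k * eps1 n ^ k

/-- `γ_i = ε₀^{-i} (1 - ε₁) N ∈ Λ`, for `i : ℤ` (the power `ε₀^{-i}` being the power of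
the corresponding group element). -/
def gam (n : ℕ) (i : ℤ) : Lam n :=
  MonoidAlgebra.of ℤ (MuMu n) (g0 n ^ (-i)) * ((1 - eps1 n) * Nel n)

/-- The `ℤ`-submodule `S ⊆ Λ` spanned by `{γ_i : 0 ≤ i ≤ n−1}`. -/
def Sgam (n : ℕ) : Submodule ℤ (Lam n) :=
  Submodule.span ℤ {x : Lam n | ∃ i : ℕ, i < n ∧ x = gam n i}

/-- `A₁` regarded as a `ℤ`-submodule of `Λ`. -/
abbrev A1Z (n : ℕ) : Submodule ℤ (Lam n) := (A1 n).restrictScalars ℤ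

/-- `E_{i,j} = (1 − ε₀^i)(1 − ε₁^j) ∈ Λ`. -/
def Ee (n : ℕ) (i j : ℕ) : Lam n := (1 - eps0 n ^ i) * (1 - eps1 n ^ j)

lemma Ee_mem (n i j : ℕ) : Ee n i j ∈ A1 n := by
  rw [A1, Ideal.mem_span_singleton]
  have h : (eps0 n - 1) * (eps1 n - 1) = (1 - eps0 n) * (1 - eps1 n) := by ring
  rw [h, Ee]
  exact mul_dvd_mul (one_sub_dvd_one_sub_pow _ i) (one_sub_dvd_one_sub_pow _ j)

/-- `E_{i,j}` as an element of the `ℤ`-module `A₁`. -/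
def ESub (n i j : ℕ) : A1Z n := ⟨Ee n i j, Ee_mem n i j⟩

/-- The second exterior power `⋀²_ℤ M` of a `ℤ`-module `M`, as a submodule of the
exterior algebra. -/
abbrev Wedge2 (M : Type*) [AddCommGroup M] [Module ℤ M] : Submodule ℤ (ExteriorAlgebra ℤ M) :=
  ⋀[ℤ]^2 M

/-- The wedge `a ∧ b` of two elements of a `ℤ`-module `M`, as an element of `⋀²_ℤ M`. -/
def wedge {M : Type*} [AddCommGroup M] [Module ℤ M] (a b : M) : Wedge2 M :=
  ⟨ExteriorAlgebra.ιMulti ℤ 2 ![a, b], ExteriorAlgebra.ιMulti_range ℤ 2 ⟨![a, b], rfl⟩⟩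

/-- The coefficient `ε(i₁,j₁,i₂,j₂) ∈ {1, −1, 0}`:
`1` if `j₂−j₁ ≡ i₂−i₁ ≢ 0 (mod n−1)`, `−1` if `j₂−j₁+1 ≡ i₂−i₁ ≢ 0 (mod n−1)`,
and `0` otherwise. -/
def epsCoef (n : ℕ) (i1 j1 i2 j2 : ℤ) : ℤ :=
  if Int.ModEq ((n : ℤ) - 1) (j2 - j1) (i2 - i1) ∧ ¬ Int.ModEq ((n : ℤ) - 1) (i2 - i1) 0
    then 1
  else if Int.ModEq ((n : ℤ) - 1) (j2 - j1 + 1) (i2 - i1) ∧ ¬ Int.ModEq ((n : ℤ) - 1) (i2 - i1) 0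
    then -1
  else 0

/-- The index set `I`, encoded as pairs `((i₁,j₁),(i₂,j₂))` of pairs of natural numbers
with `1 ≤ i₁ ≤ i₂ ≤ n−1`, `1 ≤ j₁, j₂ ≤ n−1` and `(i₁,j₁) ≠ (i₂,j₂)`. -/
def IFinset (n : ℕ) : Finset ((ℕ × ℕ) × (ℕ × ℕ)) :=
  ((Finset.Icc 1 (n - 1) ×ˢ Finset.Icc 1 (n - 1)) ×ˢ
    (Finset.Icc 1 (n - 1) ×ˢ Finset.Icc 1 (n - 1))).filter
    fun q => q.1.1 ≤ q.2.1 ∧ q.1 ≠ q.2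

/-- `Δ = ∑_{(i₁,j₁,i₂,j₂) ∈ I} ε(i₁,j₁,i₂,j₂) · E_{i₁,j₁} ∧ E_{i₂,j₂} ∈ ⋀²_ℤ A₁`. -/
def Delta (n : ℕ) : Wedge2 ↥(A1Z n) :=
  ∑ q ∈ IFinset n,
    epsCoef n (q.1.1 : ℤ) (q.1.2 : ℤ) (q.2.1 : ℤ) (q.2.2 : ℤ) •
      wedge (ESub n q.1.1 q.1.2) (ESub n q.2.1 q.2.2)

/-- The `ℤ`-submodule `S ∧ A₁` of `⋀²_ℤ A₁`, generated by the wedges `s ∧ a` with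
`s ∈ S` and `a ∈ A₁`. -/
def SwedgeA1 (n : ℕ) : Submodule ℤ ↥(Wedge2 ↥(A1Z n)) :=
  Submodule.span ℤ {x : Wedge2 ↥(A1Z n) |
    ∃ s a : ↥(A1Z n), (s : Lam n) ∈ Sgam n ∧ x = wedge s a}

/-!
The coefficient `ε(i₁,j₁,i₂,j₂)` depends only on `u = i₂ - i₁` and `v = j₂ - j₁`. As the wedge
product is alternating, coefficients may be changed by any function symmetric under exchanging the
two index pairs, and up to such terms `τ(Δ) - Δ` has coefficients depending only on `w = v - u`:
they are `1`, `2`, `-2` for `w = -1`, `n - 1`, `n` and `0` otherwise.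
Writing `P c` for the sum of the `E_{i,j}` with `j - i = c`, this says
`τ(Δ) - Δ = ∑ c, (P c ∧ P (c - 1) + 2 P c ∧ P (c + n - 1) - 2 P c ∧ P (c + n))`.

Now `(P c + P (c - n)) - P 0 = (ε₁ ^ c - 1) N` for `0 ≤ c ≤ n`, because `1`, `ε₀ ^ k` and
`ε₁ ^ (k + c)` have sums over `k` not depending on `c`. It lies in `S`, which is the ideal generated
by `(1 - ε₁) N` since `ε₀ ε₁ N = N`. Modulo `S ∧ A₁` the terms for `c` and `c - n` therefore add up
to `P 0 ∧ P (c - 1) - P 0 ∧ P c`, and the sum over `1 ≤ c ≤ n` telescopes to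
`P 0 ∧ P 0 - P 0 ∧ P n = 0`.
-/

section AlternatingSums

variable {ι A R M W : Type*} [Ring A] [CommRing R] [AddCommGroup M] [Module R M]
  [AddCommGroup W] [Module R W] [Module A W] {B : M →ₗ[R] M →ₗ[R] W}

lemma sum_smul_eq_sum_smul_of_isAlt (hB : B.IsAlt) {s : Finset ι} (e : ι → M) {a b : ι → ι → A}
    (hab : ∀ p ∈ s, ∀ q ∈ s, a p q - a q p = b p q - b q p) :
    ∑ p ∈ s, ∑ q ∈ s, a p q • B (e p) (e q) = ∑ p ∈ s, ∑ q ∈ s, b p q • B (e p) (e q) := by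
  simp only [← Finset.sum_product', ← sub_eq_zero (b := ∑ _ ∈ s ×ˢ s, _ • _),
    ← Finset.sum_sub_distrib, ← sub_smul]
  refine Finset.sum_involution (fun x _ ↦ x.swap) ?_ ?_ (fun x hx ↦ ?_) fun x _ ↦ x.swap_swap
  · rintro ⟨p, q⟩ hpq
    obtain ⟨hp, hq⟩ := Finset.mem_product.1 hpq
    have hsymm : a q p - b q p = a p q - b p q := by
      rw [sub_eq_sub_iff_sub_eq_sub, ← neg_sub (a p q), hab p hp q hq, neg_sub]
    simp only [Prod.swap_prod_mk, hsymm, ← hB.neg (e p) (e q), smul_neg, add_neg_cancel]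
  · rintro ⟨p, q⟩ - hne hswap
    obtain rfl : q = p := congrArg Prod.fst hswap
    exact hne (by rw [hB.self_eq_zero, smul_zero])
  · exact Finset.mem_product.2 (Finset.mem_product.1 hx).symm

/-- The part of `∑ p ∈ s, e p` supported on the level set `f p = c`. -/
def levelSum (s : Finset ι) (f : ι → ℤ) (e : ι → M) (c : ℤ) : M :=
  ∑ p ∈ s with f p = c, e p

lemma levelSum_eq_zero {s : Finset ι} {f : ι → ℤ} {c : ℤ} (h : ∀ p ∈ s, f p ≠ c) (e : ι → M) :
    levelSum s f e c = 0 := by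
  rw [levelSum, Finset.filter_false_of_mem h, Finset.sum_empty]

lemma sum_ite_sub_eq_sum_levelSum (B : M →ₗ[R] M →ₗ[R] W) {s : Finset ι} {f : ι → ℤ}
    {t : Finset ℤ} (hf : ∀ p ∈ s, f p ∈ t) (e : ι → M) (d : ℤ) :
    ∑ p ∈ s, ∑ q ∈ s, (if f q - f p = d then B (e p) (e q) else 0) =
      ∑ c ∈ t, B (levelSum s f e c) (levelSum s f e (c + d)) := by
  have inner (p : ι) : ∑ q ∈ s, (if f q - f p = d then B (e p) (e q) else 0) =
      B (e p) (levelSum s f e (f p + d)) := by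
    simp only [levelSum, map_sum, ← Finset.sum_filter, sub_eq_iff_eq_add']
  simp only [inner, ← Finset.sum_fiberwise_of_maps_to hf]
  refine Finset.sum_congr rfl fun c _ ↦ ?_
  rw [levelSum, map_sum, LinearMap.sum_apply]
  refine Finset.sum_congr rfl fun p hp ↦ ?_
  rw [(Finset.mem_filter.1 hp).2]

lemma sum_Ioc_neg_self {G : Type*} [AddCommMonoid G] (n : ℕ) (g : ℤ → G) :
    ∑ c ∈ Finset.Ioc (-n : ℤ) n, g c = ∑ k ∈ Finset.range n, (g (k + 1) + g (k + 1 - n)) := by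
  have hcard : ((n : ℤ) - -n).toNat = n + n := by omega
  rw [Int.Ioc_eq_finset_map, Finset.sum_map, hcard, Finset.sum_range_add, add_comm,
    ← Finset.sum_add_distrib]
  refine Finset.sum_congr rfl fun k _ ↦ ?_
  congr 2 <;> simp <;> ring

/-- The kernel by which the coefficients of `τ(Δ)` differ from those of `Δ`, up to symmetric
terms; its argument is `(j₂ - i₂) - (j₁ - i₁)`. -/
def swapKernel (n : ℕ) (w : ℤ) : ℤ :=
  (if w = -1 then 1 else 0) + 2 * (if w = n - 1 then 1 else 0) - 2 * (if w = n then 1 else 0)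

lemma isAlt_telescope_term (hB : B.IsAlt) {x y y' z z' : M} (h : B (y + z) = B x)
    (h' : B (y' + z') = B x) :
    B y' y + B z' z + 2 • B z' y - 2 • B z' y' = B x y - B x y' := by
  have hz (a : M) : B z a = B x a - B y a := by rw [← h, map_add]; simp
  have hz' (a : M) : B z' a = B x a - B y' a := by rw [← h', map_add]; simp
  have hzz : B z' z = B x y' - B x y + B y' y := by
    rw [← hB.neg z z', hz, ← hB.neg z' x, ← hB.neg z' y, hz', hz', hB.self_eq_zero,
      ← hB.neg x y']
    abel
  rw [hzz, hz', hz', hB.self_eq_zero]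
  abel

theorem sum_swapKernel_smul_eq_zero (hB : B.IsAlt) {n : ℕ} {s : Finset ι} {f : ι → ℤ} {e : ι → M}
    (hf : ∀ p ∈ s, |f p| < n)
    (hP : ∀ c : ℕ, c ≤ n →
      B (levelSum s f e c + levelSum s f e (c - n)) = B (levelSum s f e 0)) :
    ∑ p ∈ s, ∑ q ∈ s, swapKernel n (f q - f p) • B (e p) (e q) = 0 := by
  set P : ℤ → M := levelSum s f e
  have hmaps : ∀ p ∈ s, f p ∈ Finset.Ioc (-n : ℤ) n := fun p hp ↦ by
    have := abs_lt.1 (hf p hp)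
    exact Finset.mem_Ioc.2 ⟨this.1, this.2.le⟩
  have hzero (c : ℤ) (hc : n ≤ c) : P c = 0 :=
    levelSum_eq_zero (fun p hp ↦ ((lt_of_abs_lt (hf p hp)).trans_le hc).ne) e
  have hterm : ∀ k ∈ Finset.range n,
      B (P (k + 1)) (P (k + 1 + -1)) + B (P (k + 1 - n)) (P (k + 1 - n + -1)) +
        2 • (B (P (k + 1)) (P (k + 1 + (n - 1))) + B (P (k + 1 - n)) (P (k + 1 - n + (n - 1)))) -
        2 • (B (P (k + 1)) (P (k + 1 + n)) + B (P (k + 1 - n)) (P (k + 1 - n + n))) =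
      B (P 0) (P (k : ℕ)) - B (P 0) (P (k + 1 : ℕ)) := fun k hk ↦ by
    rw [Finset.mem_range] at hk
    rw [hzero (k + 1 + (n - 1)) (by omega), hzero (k + 1 + n) (by omega),
      show (k + 1 + -1 : ℤ) = k by ring, show (k + 1 - n + -1 : ℤ) = k - n by ring,
      show (k + 1 - n + (n - 1) : ℤ) = k by ring, show (k + 1 - n + n : ℤ) = k + 1 by ring,
      map_zero, zero_add, zero_add]
    exact_mod_cast isAlt_telescope_term hB (hP k hk.le) (hP (k + 1) hk)
  calc ∑ p ∈ s, ∑ q ∈ s, swapKernel n (f q - f p) • B (e p) (e q)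
    _ = ∑ c ∈ Finset.Ioc (-n : ℤ) n, (B (P c) (P (c + -1)) + 2 • B (P c) (P (c + (n - 1))) -
          2 • B (P c) (P (c + n))) := by
      simp only [swapKernel, sub_smul, add_smul, mul_smul, ite_smul, one_smul, zero_smul,
        Finset.sum_sub_distrib, Finset.sum_add_distrib, ← Finset.smul_sum,
        sum_ite_sub_eq_sum_levelSum B hmaps, ofNat_smul_eq_nsmul, P]
    _ = ∑ k ∈ Finset.range n, (B (P 0) (P (k : ℕ)) - B (P 0) (P (k + 1 : ℕ))) := by
      rw [sum_Ioc_neg_self]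
      refine Finset.sum_congr rfl fun k hk ↦ ?_
      rw [← hterm k hk]
      simp only [smul_add]
      abel
    _ = 0 := by
      rw [Finset.sum_range_sub' fun k : ℕ ↦ B (P 0) (P k), hzero n le_rfl, map_zero, sub_zero]
      exact hB.self_eq_zero _

end AlternatingSums

section Coefficients

lemma dvd_iff_of_neg_two_mul_lt_of_lt {m w : ℤ} (hlo : -(2 * m) < w) (hhi : w < m) :
    m ∣ w ↔ w = 0 ∨ w = -m := by
  refine ⟨fun h ↦ ?_, by rintro (rfl | rfl) <;> simp⟩
  by_cases hw : -m < w
  · exact .inl (Int.eq_zero_of_abs_lt_dvd h (abs_lt.2 ⟨hw, hhi⟩))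
  · have := Int.eq_zero_of_abs_lt_dvd (dvd_add_self_right.2 h) (abs_lt.2 ⟨by omega, by omega⟩)
    exact .inr (by omega)

/-- The coefficient `ε(i₁,j₁,i₂,j₂)`, extended by zero off the index set `I`, as a function of
`u = i₂ - i₁` and `v = j₂ - j₁`. -/
def diffCoef (n : ℕ) (u v : ℤ) : ℤ :=
  if 0 < u then
    if v - u = 0 ∨ v - u = 1 - n then 1 else if v - u = -1 ∨ v - u = -n then -1 else 0
  else 0

lemma epsCoef_eq_diffCoef {n : ℕ} {i₁ j₁ i₂ j₂ : ℤ} (hi : 0 ≤ i₂ - i₁) (hi' : i₂ - i₁ < n - 1)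
    (hj : |j₂ - j₁| < n - 1) :
    epsCoef n i₁ j₁ i₂ j₂ = diffCoef n (i₂ - i₁) (j₂ - j₁) := by
  obtain ⟨hj₁, hj₂⟩ := abs_lt.1 hj
  have hu : i₂ - i₁ ≡ 0 [ZMOD (n - 1 : ℤ)] ↔ i₂ - i₁ = 0 := by
    rw [Int.modEq_comm, Int.modEq_iff_dvd, sub_zero]
    exact ⟨fun h ↦ Int.eq_zero_of_abs_lt_dvd h (abs_lt.2 ⟨by omega, hi'⟩), by simp +contextual⟩
  obtain hzero | hpos := hi.eq_or_lt
  · simp [epsCoef, diffCoef, ← hzero]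
  · have hdvd (w : ℤ) := dvd_iff_of_neg_two_mul_lt_of_lt (m := n - 1) (w := w)
    have h₀ : j₂ - j₁ ≡ i₂ - i₁ [ZMOD (n - 1 : ℤ)] ↔
        j₂ - j₁ - (i₂ - i₁) = 0 ∨ j₂ - j₁ - (i₂ - i₁) = 1 - n := by
      rw [Int.modEq_comm, Int.modEq_iff_dvd, hdvd _ (by omega) (by omega), neg_sub]
    have h₁ : j₂ - j₁ + 1 ≡ i₂ - i₁ [ZMOD (n - 1 : ℤ)] ↔
        j₂ - j₁ - (i₂ - i₁) = -1 ∨ j₂ - j₁ - (i₂ - i₁) = -n := by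
      rw [Int.modEq_comm, Int.modEq_iff_dvd, hdvd _ (by omega) (by omega)]
      omega
    simp only [epsCoef, diffCoef, h₀, h₁, hu, hpos.ne', hpos, not_false_eq_true, and_true, if_true]

lemma diffCoef_eq_of_abs_lt {n : ℕ} {u v : ℤ} (hu : |u| < n - 1) (hv : |v| < n - 1) :
    diffCoef n u v = (if v - u = 1 - n then 1 else 0) - (if v - u = -n then 1 else 0) +
      if 0 < u then (if v - u = 0 then 1 else 0) - (if v - u = -1 then 1 else 0) else 0 := by
  rw [abs_lt] at hu hv
  -- Since `v > 1 - n`, each of `v - u = 1 - n` and `v - u = -n` already forces `0 < u`.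
  rw [diffCoef]
  grind

lemma diffCoef_swap_sub_diffCoef {n : ℕ} {u v : ℤ} (hu : |u| < n - 1) (hv : |v| < n - 1) :
    diffCoef n v u - diffCoef n u v - (diffCoef n (-v) (-u) - diffCoef n (-u) (-v)) =
      swapKernel n (v - u) - swapKernel n (u - v) := by
  have hu' : |-u| < n - 1 := by rwa [abs_neg]
  have hv' : |-v| < n - 1 := by rwa [abs_neg]
  rw [diffCoef_eq_of_abs_lt hu hv, diffCoef_eq_of_abs_lt hv hu, diffCoef_eq_of_abs_lt hu' hv',
    diffCoef_eq_of_abs_lt hv' hu', swapKernel, swapKernel]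
  have hneg : -u - -v = v - u := by ring
  have hneg' : -v - -u = u - v := by ring
  have hreflect (c : ℤ) : u - v = c ↔ v - u = -c := by omega
  simp only [hneg, hneg', hreflect, neg_neg, neg_sub, neg_zero]
  grind

end Coefficients

section Reindexing

variable {R M W : Type*} [CommRing R] [AddCommGroup M] [Module R M] [AddCommGroup W] [Module R W]

/-- The square `{1, …, n-1}²` in which the index pairs `(i, j)` of the `E_{i,j}` live. -/
def indexSquare (n : ℕ) : Finset (ℕ × ℕ) := Finset.Icc 1 (n - 1) ×ˢ Finset.Icc 1 (n - 1)

/-- The sum of `e` over the diagonal `j - i = c` of the index square. -/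
def diagSum (n : ℕ) (e : ℕ × ℕ → M) (c : ℤ) : M :=
  levelSum (indexSquare n) (fun p ↦ (p.2 : ℤ) - p.1) e c

lemma mem_indexSquare {n : ℕ} {p : ℕ × ℕ} :
    p ∈ indexSquare n ↔ (1 ≤ p.1 ∧ p.1 < n) ∧ 1 ≤ p.2 ∧ p.2 < n := by
  simp only [indexSquare, Finset.mem_product, Finset.mem_Icc]
  omega

lemma abs_sub_lt_of_mem_indexSquare {n : ℕ} {p q : ℕ × ℕ} (hp : p ∈ indexSquare n)
    (hq : q ∈ indexSquare n) : |(q.1 : ℤ) - p.1| < n - 1 ∧ |(q.2 : ℤ) - p.2| < n - 1 := by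
  rw [mem_indexSquare] at hp hq
  simp only [abs_lt]
  omega

lemma abs_diag_lt_of_mem_indexSquare {n : ℕ} {p : ℕ × ℕ} (hp : p ∈ indexSquare n) :
    |(p.2 : ℤ) - p.1| < n := by
  rw [mem_indexSquare] at hp
  rw [abs_lt]
  omega

lemma sum_indexSquare_swap {G : Type*} [AddCommMonoid G] (n : ℕ) (g : ℕ × ℕ → G) :
    ∑ p ∈ indexSquare n, g p.swap = ∑ p ∈ indexSquare n, g p :=
  Finset.sum_equiv (Equiv.prodComm ℕ ℕ)
    (fun p ↦ by simp only [mem_indexSquare, Equiv.prodComm_apply, Prod.swap, and_comm])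
    fun _ _ ↦ rfl

lemma sum_IFinset_epsCoef_smul (n : ℕ) (g : ℕ × ℕ → ℕ × ℕ → W) :
    ∑ q ∈ IFinset n, epsCoef n q.1.1 q.1.2 q.2.1 q.2.2 • g q.1 q.2 =
      ∑ p ∈ indexSquare n, ∑ q ∈ indexSquare n,
        diffCoef n ((q.1 : ℤ) - p.1) ((q.2 : ℤ) - p.2) • g p q := by
  rw [IFinset, Finset.sum_filter, Finset.sum_product]
  refine Finset.sum_congr rfl fun p hp ↦ Finset.sum_congr rfl fun q hq ↦ ?_
  obtain ⟨hu, hv⟩ := abs_sub_lt_of_mem_indexSquare hp hq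
  split_ifs with hpq <;> dsimp only at hpq
  · rw [epsCoef_eq_diffCoef (by omega) (lt_of_abs_lt hu) hv]
  · have hnonpos : ¬ 0 < (q.1 : ℤ) - p.1 := fun hlt ↦
      hpq ⟨by omega, by rintro rfl; omega⟩
    rw [diffCoef, if_neg hnonpos, zero_smul]

theorem sum_epsCoef_smul_swap {B : M →ₗ[R] M →ₗ[R] W} (hB : B.IsAlt) {n : ℕ} {e : ℕ × ℕ → M}
    (hdiag : ∀ c : ℕ, c ≤ n → B (diagSum n e c + diagSum n e (c - n)) = B (diagSum n e 0)) :
    ∑ q ∈ IFinset n, epsCoef n q.1.1 q.1.2 q.2.1 q.2.2 • B (e q.1.swap) (e q.2.swap) =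
      ∑ q ∈ IFinset n, epsCoef n q.1.1 q.1.2 q.2.1 q.2.2 • B (e q.1) (e q.2) := by
  rw [sum_IFinset_epsCoef_smul n fun p q ↦ B (e p.swap) (e q.swap),
    sum_IFinset_epsCoef_smul n fun p q ↦ B (e p) (e q), ← sub_eq_zero]
  calc _ = ∑ p ∈ indexSquare n, ∑ q ∈ indexSquare n,
          (diffCoef n ((q.2 : ℤ) - p.2) ((q.1 : ℤ) - p.1) -
            diffCoef n ((q.1 : ℤ) - p.1) ((q.2 : ℤ) - p.2)) • B (e p) (e q) := by
        simp only [sub_smul, Finset.sum_sub_distrib]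
        congr 1
        rw [← sum_indexSquare_swap]
        refine Finset.sum_congr rfl fun p _ ↦ ?_
        rw [← sum_indexSquare_swap]
        rfl
    _ = ∑ p ∈ indexSquare n, ∑ q ∈ indexSquare n,
          swapKernel n ((q.2 : ℤ) - q.1 - (p.2 - p.1)) • B (e p) (e q) := by
        refine sum_smul_eq_sum_smul_of_isAlt hB e fun p hp q hq ↦ ?_
        obtain ⟨hu, hv⟩ := abs_sub_lt_of_mem_indexSquare hp hq
        have hdiff : (q.2 : ℤ) - q.1 - (p.2 - p.1) = q.2 - p.2 - (q.1 - p.1) := by ring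
        have hdiff' : (p.2 : ℤ) - p.1 - (q.2 - q.1) = q.1 - p.1 - (q.2 - p.2) := by ring
        rw [hdiff, hdiff', ← diffCoef_swap_sub_diffCoef hu hv, neg_sub, neg_sub]
    _ = 0 := sum_swapKernel_smul_eq_zero hB (f := fun p : ℕ × ℕ ↦ (p.2 : ℤ) - p.1)
        (fun _ ↦ abs_diag_lt_of_mem_indexSquare) hdiag

end Reindexing

section GroupRing

lemma pow_mul_geom_sum_of_pow_eq_one {A : Type*} [Ring A] {x : A} {n : ℕ} (hx : x ^ n = 1)
    (k : ℕ) : x ^ k * ∑ i ∈ Finset.range n, x ^ i = ∑ i ∈ Finset.range n, x ^ i := by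
  have hfix : x * ∑ i ∈ Finset.range n, x ^ i = ∑ i ∈ Finset.range n, x ^ i := by
    have := mul_neg_geom_sum x n
    rwa [hx, sub_self, sub_mul, one_mul, sub_eq_zero, eq_comm] at this
  induction k with
  | zero => rw [pow_zero, one_mul]
  | succ k ih => rw [pow_succ, mul_assoc, hfix, ih]

variable {n : ℕ}

lemma eps0_pow_self (n : ℕ) : eps0 n ^ n = 1 := by
  rw [eps0, ← map_pow, ← map_one (MonoidAlgebra.of ℤ (MuMu n))]
  congr 1
  simp [g0, Prod.ext_iff, ← ofAdd_nsmul]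

lemma eps1_pow_self (n : ℕ) : eps1 n ^ n = 1 := by
  rw [eps1, ← map_pow, ← map_one (MonoidAlgebra.of ℤ (MuMu n))]
  congr 1
  simp [g1, Prod.ext_iff, ← ofAdd_nsmul]

lemma eps0_mul_eps1_pow_mul_Nel (n k : ℕ) : (eps0 n * eps1 n) ^ k * Nel n = Nel n := by
  have hpow : (eps0 n * eps1 n) ^ n = 1 := by
    rw [mul_pow, eps0_pow_self, eps1_pow_self, one_mul]
  simpa only [Nel, mul_pow] using pow_mul_geom_sum_of_pow_eq_one hpow k

lemma exists_eq_zpow_mul_pow [NeZero n] (g : MuMu n) :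
    ∃ i < n, ∃ k : ℕ, g = g0 n ^ (-i : ℤ) * (g0 n * g1 n) ^ k := by
  obtain ⟨a, b⟩ := g
  refine ⟨(b.toAdd - a.toAdd).val, ZMod.val_lt _, b.toAdd.val, ?_⟩
  refine Prod.ext (Multiplicative.toAdd.injective ?_) (Multiplicative.toAdd.injective ?_) <;>
    simp [g0, g1]

lemma Sgam_eq_restrictScalars_span [NeZero n] :
    Sgam n = (Ideal.span {(1 - eps1 n) * Nel n}).restrictScalars ℤ := by
  refine le_antisymm (Submodule.span_le.2 ?_) fun x hx ↦ ?_
  · rintro _ ⟨i, -, rfl⟩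
    exact Ideal.mul_mem_left _ _ (Ideal.mem_span_singleton_self _)
  · obtain ⟨a, rfl⟩ := Ideal.mem_span_singleton'.1 hx
    clear hx
    induction a using MonoidAlgebra.induction_on with
    | of g =>
      obtain ⟨i, hi, k, rfl⟩ := exists_eq_zpow_mul_pow g
      refine Submodule.subset_span ⟨i, hi, ?_⟩
      have hfix : MonoidAlgebra.of ℤ (MuMu n) ((g0 n * g1 n) ^ k) * Nel n = Nel n := by
        rw [map_pow, map_mul]
        exact eps0_mul_eps1_pow_mul_Nel n k
      rw [gam, map_mul, mul_assoc, mul_left_comm _ (1 - eps1 n), hfix]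
    | add a b ha hb => rw [add_mul]; exact add_mem ha hb
    | smul r a ha => rw [smul_mul_assoc]; exact Submodule.smul_mem _ r ha

/-- The automorphism `τ` of `Λ` induced by interchanging the two factors of `μₙ × μₙ`. -/
def tau (n : ℕ) : Lam n ≃+* Lam n :=
  (MonoidAlgebra.domCongr ℤ ℤ (MulEquiv.prodComm : MuMu n ≃* MuMu n)).toRingEquiv

lemma tau_eps0 (n : ℕ) : tau n (eps0 n) = eps1 n := by
  simp [tau, eps0, eps1, g0, g1]

lemma tau_eps1 (n : ℕ) : tau n (eps1 n) = eps0 n := by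
  simp [tau, eps0, eps1, g0, g1]

lemma tau_involutive (n : ℕ) : Function.Involutive (tau n) := fun x ↦ by
  induction x using MonoidAlgebra.induction_on with
  | of g => simp [tau]
  | add a b ha hb => rw [map_add, map_add, ha, hb]
  | smul r a ha => rw [map_zsmul, map_zsmul, ha]

lemma tau_Nel (n : ℕ) : tau n (Nel n) = Nel n := by
  simp only [Nel, map_sum, map_mul, map_pow, tau_eps0, tau_eps1, mul_comm]

lemma tau_Ee (n i j : ℕ) : tau n (Ee n i j) = Ee n j i := by
  simp only [Ee, map_mul, map_sub, map_one, map_pow, tau_eps0, tau_eps1, mul_comm]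

lemma map_mem_span_singleton_of_map_mem {A : Type*} [CommSemiring A] (f : A →+* A) {g x : A}
    (hg : f g ∈ Ideal.span {g}) (hx : x ∈ Ideal.span {g}) : f x ∈ Ideal.span {g} := by
  rw [Ideal.mem_span_singleton] at *
  exact hg.trans (map_dvd f hx)

lemma tau_mem_A1 {x : Lam n} (hx : x ∈ A1 n) : tau n x ∈ A1 n := by
  refine map_mem_span_singleton_of_map_mem (tau n).toRingHom ?_ hx
  rw [Ideal.mem_span_singleton]
  exact dvd_of_eq (by simp [tau_eps0, tau_eps1, mul_comm])

lemma tau_mem_Sgam [NeZero n] {x : Lam n} (hx : x ∈ Sgam n) : tau n x ∈ Sgam n := by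
  rw [Sgam_eq_restrictScalars_span] at *
  refine map_mem_span_singleton_of_map_mem (tau n).toRingHom ?_ hx
  have hτ : tau n ((1 - eps1 n) * Nel n) = -eps0 n * ((1 - eps1 n) * Nel n) := by
    rw [map_mul, tau_Nel, map_sub, map_one, tau_eps1]
    linear_combination -eps0_mul_eps1_pow_mul_Nel n 1
  exact Ideal.mem_span_singleton'.2 ⟨_, hτ.symm⟩

end GroupRing

section DiagonalSums

lemma Ee_mod (n i j : ℕ) : Ee n i (j % n) = Ee n i j := by
  rw [Ee, Ee, ← pow_eq_pow_mod j (eps1_pow_self n)]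

lemma diagSum_Ee (n : ℕ) (c : ℤ) : diagSum n (fun p ↦ Ee n p.1 p.2) c =
    ∑ i ∈ Finset.range n, ∑ j ∈ Finset.range n, if (j : ℤ) - i = c then Ee n i j else 0 := by
  rw [diagSum, levelSum, Finset.sum_filter, ← Finset.sum_product']
  refine Finset.sum_subset (fun p hp ↦ ?_) fun p hp hp' ↦ ?_
  · rw [mem_indexSquare] at hp
    simp only [Finset.mem_product, Finset.mem_range, hp, and_self]
  · have hzero : p.1 = 0 ∨ p.2 = 0 := by
      rw [mem_indexSquare] at hp'
      rw [Finset.mem_product, Finset.mem_range, Finset.mem_range] at hp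
      omega
    rcases hzero with h | h <;> simp [Ee, h]

lemma diagSum_Ee_add {n c : ℕ} (hc : c ≤ n) :
    diagSum n (fun p ↦ Ee n p.1 p.2) c + diagSum n (fun p ↦ Ee n p.1 p.2) (c - n) =
      ∑ k ∈ Finset.range n, Ee n k (k + c) := by
  simp only [diagSum_Ee, ← Finset.sum_add_distrib]
  refine Finset.sum_congr rfl fun i hi ↦ ?_
  rw [Finset.mem_range] at hi
  have hmod : (i + c) % n = if i + c < n then i + c else i + c - n := by
    split_ifs with h
    · exact Nat.mod_eq_of_lt h
    · rw [Nat.mod_eq_sub_mod (not_lt.1 h), Nat.mod_eq_of_lt (by omega)]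
  rw [Finset.sum_eq_single_of_mem ((i + c) % n) (Finset.mem_range.2 (Nat.mod_lt _ (by omega)))]
  · rw [← Ee_mod n i (i + c)]
    grind
  · intro j hj hne
    rw [Finset.mem_range] at hj
    rw [if_neg (by grind), if_neg (by grind), add_zero]

lemma sum_Ee_add_sub_sum_Ee (n c : ℕ) :
    ∑ k ∈ Finset.range n, Ee n k (k + c) - ∑ k ∈ Finset.range n, Ee n k k =
      (eps1 n ^ c - 1) * Nel n := by
  have expand (c : ℕ) : ∑ k ∈ Finset.range n, Ee n k (k + c) =
      ∑ k ∈ Finset.range n, (1 - eps0 n ^ k) - ∑ k ∈ Finset.range n, eps1 n ^ k +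
        eps1 n ^ c * Nel n := by
    rw [← pow_mul_geom_sum_of_pow_eq_one (eps1_pow_self n) c, Nel, Finset.mul_sum, Finset.mul_sum,
      ← Finset.sum_sub_distrib, ← Finset.sum_add_distrib]
    exact Finset.sum_congr rfl fun k _ ↦ by rw [Ee]; ring
  have expand_zero := expand 0
  simp only [add_zero] at expand_zero
  rw [expand c, expand_zero]
  ring

lemma diagSum_Ee_add_sub_mem_Sgam {n c : ℕ} [NeZero n] (hc : c ≤ n) :
    diagSum n (fun p ↦ Ee n p.1 p.2) c + diagSum n (fun p ↦ Ee n p.1 p.2) (c - n) -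
      diagSum n (fun p ↦ Ee n p.1 p.2) 0 ∈ Sgam n := by
  have hzero : diagSum n (fun p ↦ Ee n p.1 p.2) 0 = ∑ k ∈ Finset.range n, Ee n k k := by
    have hout : diagSum n (fun p ↦ Ee n p.1 p.2) (-n) = 0 := levelSum_eq_zero
      (fun p hp ↦ (abs_lt.1 (abs_diag_lt_of_mem_indexSquare hp)).1.ne') _
    simpa [hout] using diagSum_Ee_add (Nat.zero_le n)
  rw [diagSum_Ee_add hc, hzero, sum_Ee_add_sub_sum_Ee, Sgam_eq_restrictScalars_span]
  refine Ideal.mem_span_singleton.2 (mul_dvd_mul_right ?_ _)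
  rw [← neg_sub 1 (eps1 n ^ c), dvd_neg]
  exact one_sub_dvd_one_sub_pow _ c

lemma coe_diagSum_ESub (n : ℕ) (c : ℤ) :
    ((diagSum n (fun p ↦ ESub n p.1 p.2) c : A1Z n) : Lam n) =
      diagSum n (fun p ↦ Ee n p.1 p.2) c :=
  map_sum (A1Z n).subtype _ _

end DiagonalSums

section Wedge

variable {M N : Type*} [AddCommGroup M] [AddCommGroup N]

lemma coe_wedge (a b : M) :
    (wedge a b : ExteriorAlgebra ℤ M) = ExteriorAlgebra.ι ℤ a * ExteriorAlgebra.ι ℤ b := by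
  simp [wedge, ExteriorAlgebra.ιMulti_apply]

lemma wedge_self (a : M) : wedge a a = 0 :=
  Subtype.ext (by simp [coe_wedge])

/-- The wedge product `M × M → ⋀²_ℤ M` as a bilinear map. -/
def wedgeHom (M : Type*) [AddCommGroup M] : M →ₗ[ℤ] M →ₗ[ℤ] Wedge2 M :=
  LinearMap.mk₂ ℤ wedge
    (fun _ _ _ ↦ Subtype.ext (by simp [coe_wedge, add_mul]))
    (fun _ _ _ ↦ Subtype.ext (by
      simp only [coe_wedge, map_smul, smul_mul_assoc, Submodule.coe_smul]))
    (fun _ _ _ ↦ Subtype.ext (by simp [coe_wedge, mul_add]))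
    (fun _ _ _ ↦ Subtype.ext (by
      simp only [coe_wedge, map_smul, mul_smul_comm, Submodule.coe_smul]))

lemma exteriorPower_map_wedge (f : M →ₗ[ℤ] N) (a b : M) :
    exteriorPower.map 2 f (wedge a b) = wedge (f a) (f b) :=
  (exteriorPower.map_apply_ιMulti f ![a, b]).trans
    (congrArg _ (by ext i; fin_cases i <;> rfl))

/-- The isomorphism `⋀²_ℤ M ≃ ⋀²_ℤ N` induced by an isomorphism `M ≃ N`. -/
def wedgeCongr (f : M ≃ₗ[ℤ] N) : Wedge2 M ≃ₗ[ℤ] Wedge2 N :=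
  .ofLinearMap (exteriorPower.map 2 f.toLinearMap) (exteriorPower.map 2 f.symm.toLinearMap)
    (by rw [← exteriorPower.map_comp, LinearEquiv.comp_symm, exteriorPower.map_id])
    (by rw [← exteriorPower.map_comp, LinearEquiv.symm_comp, exteriorPower.map_id])

lemma wedgeCongr_wedge (f : M ≃ₗ[ℤ] N) (a b : M) :
    wedgeCongr f (wedge a b) = wedge (f a) (f b) :=
  exteriorPower_map_wedge f.toLinearMap a b

end Wedge

/-- The restriction of `τ` to the `ℤ`-module `A₁`. -/
def tauA1 (n : ℕ) : A1Z n ≃ₗ[ℤ] A1Z n :=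
  .ofInvolutive ((tau n).toAddMonoidHom.toIntLinearMap.restrict fun _ ↦ tau_mem_A1)
    fun x ↦ Subtype.ext (tau_involutive n x)

lemma tauA1_ESub (n i j : ℕ) : tauA1 n (ESub n i j) = ESub n j i :=
  Subtype.ext (tau_Ee n i j)

/-- The alternating pairing `A₁ × A₁ → ⋀²_ℤ A₁ / (S ∧ A₁)` induced by the wedge product. -/
def wedgeModS (n : ℕ) : A1Z n →ₗ[ℤ] A1Z n →ₗ[ℤ] Wedge2 (A1Z n) ⧸ SwedgeA1 n :=
  (wedgeHom (A1Z n)).compr₂ (SwedgeA1 n).mkQ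

lemma wedgeModS_isAlt (n : ℕ) : (wedgeModS n).IsAlt := fun x ↦
  (congrArg (SwedgeA1 n).mkQ (wedge_self x)).trans (map_zero _)

lemma wedgeModS_eq_of_sub_mem_Sgam {n : ℕ} {a b : A1Z n} (h : (a - b : Lam n) ∈ Sgam n) :
    wedgeModS n a = wedgeModS n b := by
  rw [← sub_eq_zero, ← map_sub]
  ext1 x
  exact (Submodule.Quotient.mk_eq_zero _).2 (Submodule.subset_span ⟨a - b, x, h, rfl⟩)

theorem wedgeCongr_Delta_sub_Delta_mem (n : ℕ) [NeZero n] :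
    wedgeCongr (tauA1 n) (Delta n) - Delta n ∈ SwedgeA1 n := by
  have hdiag (c : ℕ) (hc : c ≤ n) :
      wedgeModS n (diagSum n (fun p ↦ ESub n p.1 p.2) c +
        diagSum n (fun p ↦ ESub n p.1 p.2) (c - n)) =
      wedgeModS n (diagSum n (fun p ↦ ESub n p.1 p.2) 0) := by
    apply wedgeModS_eq_of_sub_mem_Sgam
    rw [Submodule.coe_add, coe_diagSum_ESub, coe_diagSum_ESub, coe_diagSum_ESub]
    exact diagSum_Ee_add_sub_mem_Sgam hc
  have hswap := sum_epsCoef_smul_swap (wedgeModS_isAlt n) hdiag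
  rw [← Submodule.Quotient.mk_eq_zero, ← Submodule.mkQ_apply, map_sub, sub_eq_zero, Delta]
  simp only [map_sum, map_smul, wedgeCongr_wedge, tauA1_ESub]
  exact hswap

/-- the ring automorphism `τ` of `Λ` interchanging `ε₀` and `ε₁` preserves
`A₁` and `S`, induces a `ℤ`-linear automorphism of `⋀²_ℤ A₁` with `a ∧ b ↦ τ(a) ∧ τ(b)`,
and `τ(Δ) − Δ` lies in `S ∧ A₁`. -/
theorem stmt_15 (n : ℕ) (hn : 3 ≤ n) :
    ∃ (τ : Lam n ≃+* Lam n) (τ' : ↥(A1Z n) ≃ₗ[ℤ] ↥(A1Z n))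
      (T : ↥(Wedge2 ↥(A1Z n)) ≃ₗ[ℤ] ↥(Wedge2 ↥(A1Z n))),
      τ (eps0 n) = eps1 n ∧ τ (eps1 n) = eps0 n ∧
      (∀ x ∈ A1 n, τ x ∈ A1 n) ∧
      (∀ x ∈ Sgam n, τ x ∈ Sgam n) ∧
      (∀ x : ↥(A1Z n), (τ' x : Lam n) = τ (x : Lam n)) ∧
      (∀ a b : ↥(A1Z n), T (wedge a b) = wedge (τ' a) (τ' b)) ∧
      T (Delta n) - Delta n ∈ SwedgeA1 n := by
  have : NeZero n := ⟨by omega⟩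
  exact ⟨tau n, tauA1 n, wedgeCongr (tauA1 n), tau_eps0 n, tau_eps1 n, fun _ ↦ tau_mem_A1,
    fun _ ↦ tau_mem_Sgam, fun _ ↦ rfl, wedgeCongr_wedge (tauA1 n),
    wedgeCongr_Delta_sub_Delta_mem n⟩
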